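/- (Claim 2: direct part of Theorem 3 with exponentially decaying errors and deterministic encoders.) Let W(y,z|x) be a two-receiver BC, let P be a PMF on 𝒳, and let 0 < R_𝒴 < I(P, W_𝒴) and 0 < R_𝒵 < I(P, W_𝒵). Then there exist τ > 0 and n₀ ∈ ℕ such that for every n ≥ n₀ there exists an (n, ℳ_𝒴, ℳ_𝒵, e^{−nτ}, e^{−nτ}, e^{−nτ}, e^{−nτ}) average-error ID code for the BC with (1/n)·log log |ℳ_𝒴| ≥ R_𝒴 and (1/n)·log log |ℳ_𝒵| ≥ R_𝒵, in which moreover every encoding PMF Q_{m_𝒴,m_𝒵} is a point mass on a single sequence 𝐱 ∈ 𝒳ⁿ (i.e., the encoder is deterministic). -/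

import Mathlib

open scoped Classical
open Finset

noncomputable section

/-- `P` is a probability mass function on the finite type `X`. -/
def IsPMF {X : Type*} [Fintype X] (P : X → ℝ) : Prop :=
  (∀ x, 0 ≤ P x) ∧ ∑ x, P x = 1

/-- `W` is a (discrete memoryless) channel from `X` to `Y`. -/
def IsChannel {X Y : Type*} [Fintype Y] (W : X → Y → ℝ) : Prop :=
  (∀ x y, 0 ≤ W x y) ∧ ∀ x, ∑ y, W x y = 1

/-- The `n`-fold memoryless extension `W^n(𝐲|𝐱) = ∏ᵢ W(yᵢ|xᵢ)`. -/
def Wn {X Y : Type*} (W : X → Y → ℝ) (n : ℕ) (x : Fin n → X) (y : Fin n → Y) : ℝ :=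
  ∏ i, W (x i) (y i)

/-- Mutual information `I(P,W)` (natural logarithm), with the convention that
terms with `P x * W x y = 0` contribute `0`. -/
def mutInf {X Y : Type*} [Fintype X] [Fintype Y] (P : X → ℝ) (W : X → Y → ℝ) : ℝ :=
  ∑ x, ∑ y, if P x * W x y = 0 then 0
    else P x * W x y * Real.log (W x y / ∑ x', P x' * W x' y)

/-- The error requirements of an `(n, M, l1, l2)` ID code for the DMC `W`:
maximum probability of missed identification at most `l1`, maximum probability
of wrong identification at most `l2`. -/
def IDCodeErr {X Y M : Type*} [Fintype X] [Fintype Y]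
    (n : ℕ) (W : X → Y → ℝ) (Q : M → (Fin n → X) → ℝ)
    (D : M → Finset (Fin n → Y)) (l1 l2 : ℝ) : Prop :=
  (∀ m, ∑ x, Q m x * ∑ y ∈ (D m)ᶜ, Wn W n x y ≤ l1) ∧
  (∀ m m', m ≠ m' → ∑ x, Q m x * ∑ y ∈ D m', Wn W n x y ≤ l2)

/-- `(n, M, l1, l2)` ID code for the DMC `W`. -/
def IsIDCode {X Y M : Type*} [Fintype X] [Fintype Y]
    (n : ℕ) (W : X → Y → ℝ) (Q : M → (Fin n → X) → ℝ)
    (D : M → Finset (Fin n → Y)) (l1 l2 : ℝ) : Prop :=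
  (∀ m, IsPMF (Q m)) ∧ IDCodeErr n W Q D l1 l2

/-- `W` is a two-receiver broadcast channel from `X` to `Y × Z`. -/
def IsBC {X Y Z : Type*} [Fintype Y] [Fintype Z] (W : X → Y → Z → ℝ) : Prop :=
  (∀ x y z, 0 ≤ W x y z) ∧ ∀ x, ∑ y, ∑ z, W x y z = 1

/-- Marginal channel to terminal `Y`. -/
def margY {X Y Z : Type*} [Fintype Z] (W : X → Y → Z → ℝ) : X → Y → ℝ :=
  fun x y => ∑ z, W x y z

/-- Marginal channel to terminal `Z`. -/
def margZ {X Y Z : Type*} [Fintype Y] (W : X → Y → Z → ℝ) : X → Z → ℝ :=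
  fun x z => ∑ y, W x y z

/-- `(n, ℳ_Y, ℳ_Z, l1Y, l2Y, l1Z, l2Z)` average-error ID code for the BC `W`:
every `Q my mz` is a PMF on `Xⁿ`, and the mixtures (averaging uniformly over the
other receiver's message) form ID codes for the marginal channels. -/
def IsBCIDCode {X Y Z : Type*} [Fintype X] [Fintype Y] [Fintype Z]
    (n kY kZ : ℕ) (W : X → Y → Z → ℝ)
    (Q : Fin kY → Fin kZ → (Fin n → X) → ℝ)
    (DY : Fin kY → Finset (Fin n → Y)) (DZ : Fin kZ → Finset (Fin n → Z))
    (l1Y l2Y l1Z l2Z : ℝ) : Prop :=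
  (∀ my mz, IsPMF (Q my mz)) ∧
  IDCodeErr n (margY W) (fun my x => (kZ : ℝ)⁻¹ * ∑ mz, Q my mz x) DY l1Y l2Y ∧
  IDCodeErr n (margZ W) (fun mz x => (kY : ℝ)⁻¹ * ∑ my, Q my mz x) DZ l1Z l2Z

/-- A rate pair is achievable for the BC `W` under the average-error criterion. -/
def BCAchievable {X Y Z : Type*} [Fintype X] [Fintype Y] [Fintype Z]
    (W : X → Y → Z → ℝ) (Rp : ℝ × ℝ) : Prop :=
  0 ≤ Rp.1 ∧ 0 ≤ Rp.2 ∧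
  ∀ l1Y l2Y l1Z l2Z : ℝ, 0 < l1Y → 0 < l2Y → 0 < l1Z → 0 < l2Z →
    ∃ n₀ : ℕ, ∀ n : ℕ, n₀ ≤ n →
      ∃ (kY kZ : ℕ) (Q : Fin kY → Fin kZ → (Fin n → X) → ℝ)
        (DY : Fin kY → Finset (Fin n → Y)) (DZ : Fin kZ → Finset (Fin n → Z)),
        IsBCIDCode n kY kZ W Q DY DZ l1Y l2Y l1Z l2Z ∧
        ((0 < Rp.1 → Rp.1 ≤ (1 / n) * Real.log (Real.log kY)) ∧ (Rp.1 = 0 → kY = 1)) ∧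
        ((0 < Rp.2 → Rp.2 ≤ (1 / n) * Real.log (Real.log kZ)) ∧ (Rp.2 = 0 → kZ = 1))

/-!
Codewords `c v` are drawn independently from `Pⁿ`, one for each index `v` in `𝔽^(r+j) × 𝔽`, where
`𝔽` is a prime field of size `q ≈ exp (n * β)`. The messages of the receiver with the larger rate
are the polynomials `a` in `r + j` variables of degree less than `D ≈ exp (n * α)` in each
variable, and `a` is carried by the codewords indexed by its graph. The messages of the other
receiver are the `j`-tuples `b` of such polynomials in `r` variables, and `b` is carried by the
codewords indexed by the cylinder over its graph. There are doubly exponentially many messages,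
and for `α < β` the Schwartz–Zippel lemma makes the index sets of different messages almost
disjoint.

For the pair `(a, b)` the encoder sends a single codeword of the graph of `a` over the graph of
`b`. Its base point is the sum of linear coefficients of `a` and of `b`, so it is uniform on the
graph of `a` when `b` is uniform, and uniform on the cylinder over `b` when `a` is. A receiver
accepts a message if its output is typical for a codeword that carries it. Since the index sets
have `q ^ (r + j)` and `q ^ (r + 1)` elements, fewer than `exp (n * I(P, W))` for the respective
channel, false typicality is rare; a Chernoff bound makes the failure probability of each message
doubly exponentially small, which is enough for a union bound over all pairs of messages.
-/

section IID

variable {V α : Type*} [Fintype V]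

/-- The product distribution `pⱽ`: the probability of the family `x` of letters when all letters
are drawn independently from `p`. -/
def iidProb (p : α → ℝ) (x : V → α) : ℝ := ∏ v, p (x v)

variable [DecidableEq V] [Fintype α] {p : α → ℝ}

lemma sum_iidProb_mul_prod (p : α → ℝ) (f : V → α → ℝ) :
    ∑ x : V → α, iidProb p x * ∏ v, f v (x v) = ∏ v, ∑ a, p a * f v a := by
  simp only [iidProb, ← prod_mul_distrib]
  rw [Finset.prod_univ_sum, Fintype.piFinset_univ]

lemma IsPMF.iidProb (hp : IsPMF p) : IsPMF (iidProb p : (V → α) → ℝ) :=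
  ⟨fun _ => prod_nonneg fun _ _ => hp.1 _, by
    simpa [hp.2] using sum_iidProb_mul_prod (V := V) p fun _ _ => 1⟩

lemma sum_iidProb_mul_prod_restrict (p : α → ℝ) (U : Finset V)
    (h : ({v // v ∉ U} → α) → α → ℝ) :
    ∑ x : V → α, iidProb p x * ∏ u ∈ U, h (fun v => x v) (x u) =
      ∑ z : {v // v ∉ U} → α, iidProb p z * (∑ a, p a * h z a) ^ #U := by
  have hsplit (x : V → α) : iidProb p x * ∏ u ∈ U, h (fun v => x v) (x u) =
      iidProb p (fun v : {v // v ∉ U} => x v) *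
        (iidProb p (fun u : U => x u) * ∏ u : U, h (fun v => x v) (x u)) := by
    have hcompl : ∏ v ∈ Uᶜ, p (x v) = ∏ v : {v // v ∉ U}, p (x v) :=
      prod_subtype Uᶜ (fun _ => mem_compl) fun v => p (x v)
    rw [iidProb, ← prod_mul_prod_compl U, ← prod_coe_sort U, ← prod_coe_sort U, hcompl]
    simp only [iidProb]
    ring
  calc ∑ x : V → α, iidProb p x * ∏ u ∈ U, h (fun v => x v) (x u)
      = ∑ yz : (U → α) × ({v // v ∉ U} → α),
          iidProb p yz.2 * (iidProb p yz.1 * ∏ u, h yz.2 (yz.1 u)) :=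
        Fintype.sum_equiv (Equiv.piEquivPiSubtypeProd (· ∈ U) fun _ => α) _ _ hsplit
    _ = ∑ z : {v // v ∉ U} → α, iidProb p z * (∑ a, p a * h z a) ^ #U := by
        rw [Fintype.sum_prod_type_right]
        simp only [← mul_sum, sum_iidProb_mul_prod p fun _ => h _, prod_const, card_univ,
          Fintype.card_coe]

lemma sum_iidProb_mul_prod_le (hp : IsPMF p) {U : Finset V} {H : (V → α) → α → ℝ}
    (hH : DependsOn H (↑U)ᶜ) (hH0 : ∀ x a, 0 ≤ H x a) {C : ℝ}
    (hC : ∀ x, ∑ a, p a * H x a ≤ C) :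
    ∑ x, iidProb p x * ∏ u ∈ U, H x (x u) ≤ C ^ #U := by
  obtain ⟨a₀⟩ : Nonempty α := not_isEmpty_iff.1 fun _ => by simpa using hp.2
  let extend (z : {v // v ∉ U} → α) (v : V) : α := if hv : v ∈ U then a₀ else z ⟨v, hv⟩
  have hextend (x : V → α) : H x = H (extend fun v => x v) :=
    hH fun v hv => by simp only [extend, dif_neg (show v ∉ U from hv)]
  calc ∑ x, iidProb p x * ∏ u ∈ U, H x (x u)
      = ∑ x : V → α, iidProb p x * ∏ u ∈ U, H (extend fun v => x v) (x u) := by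
        simp only [← hextend]
    _ = ∑ z, iidProb p z * (∑ a, p a * H (extend z) a) ^ #U :=
        sum_iidProb_mul_prod_restrict p U fun z => H (extend z)
    _ ≤ ∑ z : {v // v ∉ U} → α, iidProb p z * C ^ #U := by
        gcongr with z _
        · exact hp.iidProb.1 z
        · exact sum_nonneg fun a _ => mul_nonneg (hp.1 a) (hH0 _ a)
        · exact hC _
    _ = C ^ #U := by rw [← sum_mul, hp.iidProb.2, one_mul]

lemma exp_le_one_add_two_mul {t : ℝ} (h0 : 0 ≤ t) (h1 : t ≤ 1) : Real.exp t ≤ 1 + 2 * t := by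
  have hconv := convexOn_exp.2 (Set.mem_univ 0) (Set.mem_univ 1) (sub_nonneg.2 h1) h0 (by ring)
  simp only [smul_eq_mul, mul_zero, mul_one, zero_add, Real.exp_zero] at hconv
  nlinarith [Real.exp_one_lt_d9]

lemma sum_mul_exp_le_exp_two_mul (hp : IsPMF p) {g : α → ℝ} (hg : ∀ a, g a ∈ Set.Icc 0 1)
    {μ : ℝ} (hμ : ∑ a, p a * g a ≤ μ) :
    ∑ a, p a * Real.exp (g a) ≤ Real.exp (2 * μ) := by
  calc ∑ a, p a * Real.exp (g a) ≤ ∑ a, p a * (1 + 2 * g a) := by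
        gcongr with a _
        · exact hp.1 a
        · exact exp_le_one_add_two_mul (hg a).1 (hg a).2
    _ = 1 + 2 * ∑ a, p a * g a := by
        simp only [mul_add, mul_one, sum_add_distrib, hp.2, mul_sum, mul_left_comm]
    _ ≤ 1 + 2 * μ := by gcongr
    _ ≤ Real.exp (2 * μ) := by linarith [Real.add_one_le_exp (2 * μ)]

/- Conditionally on the letters outside `U`, which determine `g`, the summands are independent. -/
lemma sum_iidProb_lt_sum_le_exp (hp : IsPMF p) {U : Finset V} {g : (V → α) → α → ℝ}
    (hg : DependsOn g (↑U)ᶜ) (hg01 : ∀ x a, g x a ∈ Set.Icc 0 1) {μ : ℝ}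
    (hμ : ∀ x, ∑ a, p a * g x a ≤ μ) (hμ0 : 0 ≤ μ) {N : ℕ} (hN : #U ≤ N) :
    ∑ x with 3 * μ * N < ∑ u ∈ U, g x (x u), iidProb p x ≤ Real.exp (-(μ * N)) := by
  have hp0 : ∀ x : V → α, 0 ≤ iidProb p x := hp.iidProb.1
  have hmoment : ∑ x, iidProb p x * ∏ u ∈ U, Real.exp (g x (x u)) ≤ Real.exp (2 * μ) ^ #U :=
    sum_iidProb_mul_prod_le hp (H := fun x a => Real.exp (g x a))
      (fun x y hxy => by simp only [hg hxy]) (fun _ _ => (Real.exp_pos _).le)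
      fun x => sum_mul_exp_le_exp_two_mul hp (hg01 x) (hμ x)
  calc ∑ x with 3 * μ * N < ∑ u ∈ U, g x (x u), iidProb p x
      ≤ ∑ x with 3 * μ * N < ∑ u ∈ U, g x (x u),
          iidProb p x * Real.exp (∑ u ∈ U, g x (x u) - 3 * μ * N) :=
        sum_le_sum fun x hx => le_mul_of_one_le_right (hp0 x)
          (Real.one_le_exp (sub_nonneg.2 (mem_filter.1 hx).2.le))
    _ ≤ ∑ x, iidProb p x * Real.exp (∑ u ∈ U, g x (x u) - 3 * μ * N) :=
        sum_le_sum_of_subset_of_nonneg (filter_subset _ _)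
          fun x _ _ => mul_nonneg (hp0 x) (Real.exp_pos _).le
    _ = Real.exp (-(3 * μ * N)) * ∑ x, iidProb p x * ∏ u ∈ U, Real.exp (g x (x u)) := by
        rw [mul_sum]
        refine sum_congr rfl fun x _ => ?_
        rw [sub_eq_add_neg, Real.exp_add, Real.exp_sum]
        ring
    _ ≤ Real.exp (-(3 * μ * N)) * Real.exp (2 * μ) ^ #U := by gcongr
    _ = Real.exp (2 * μ * #U - 3 * μ * N) := by
        rw [← Real.exp_nat_mul, ← Real.exp_add]
        ring_nf
    _ ≤ Real.exp (-(μ * N)) := by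
        have : (#U : ℝ) ≤ N := by exact_mod_cast hN
        gcongr
        nlinarith

end IID

section UnionBound

variable {ι β : Type*} {f : β → ℝ}

lemma sum_biUnion_le [DecidableEq β] (hf : ∀ b, 0 ≤ f b) (s : Finset ι) (t : ι → Finset β) :
    ∑ b ∈ s.biUnion t, f b ≤ ∑ i ∈ s, ∑ b ∈ t i, f b := by
  induction s using Finset.cons_induction with
  | empty => simp
  | cons i s hi ih =>
    rw [cons_eq_insert, biUnion_insert, sum_insert hi]
    have hinter : 0 ≤ ∑ b ∈ t i ∩ s.biUnion t, f b := sum_nonneg fun b _ => hf b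
    linarith [sum_union_inter (s₁ := t i) (s₂ := s.biUnion t) (f := f)]

lemma sum_filter_exists_le [Fintype ι] [Fintype β] (hf : ∀ b, 0 ≤ f b) (E : ι → β → Prop) :
    ∑ b with ∃ i, E i b, f b ≤ ∑ i, ∑ b with E i b, f b := by
  have : ({b | ∃ i, E i b} : Finset β) = univ.biUnion fun i => {b | E i b} := by ext; simp
  rw [this]
  exact sum_biUnion_le hf _ _

lemma IsPMF.exists_and_of_sum_not_lt_half {T : Type*} [Fintype T] {p : T → ℝ} (hp : IsPMF p)
    {A B : T → Prop} (hA : ∑ t with ¬ A t, p t < 1 / 2) (hB : ∑ t with ¬ B t, p t < 1 / 2) :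
    ∃ t, A t ∧ B t := by
  by_contra! h
  have hcover : (univ : Finset T) ⊆ ({t | ¬ A t} : Finset T) ∪ ({t | ¬ B t} : Finset T) :=
    fun t _ => by simpa [imp_iff_not_or] using h t
  have hle : ∑ t, p t ≤ ∑ t with ¬ A t, p t + ∑ t with ¬ B t, p t :=
    (sum_le_sum_of_subset_of_nonneg hcover fun t _ _ => hp.1 t).trans <| by
      rw [← sum_union_inter]
      exact le_add_of_nonneg_right (sum_nonneg fun t _ => hp.1 t)
  linarith [hp.2]

end UnionBound

section Channel

variable {X Y : Type*} [Fintype Y] {W : X → Y → ℝ} {n : ℕ}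

lemma IsChannel.Wn_nonneg (hW : IsChannel W) (x : Fin n → X) (y : Fin n → Y) : 0 ≤ Wn W n x y :=
  prod_nonneg fun _ _ => hW.1 _ _

lemma sum_prod_apply_eq (f : X → Y → ℝ) (x : Fin n → X) :
    ∑ y : Fin n → Y, ∏ i, f (x i) (y i) = ∏ i, ∑ b, f (x i) b := by
  rw [Finset.prod_univ_sum, Fintype.piFinset_univ]

lemma IsChannel.sum_Wn (hW : IsChannel W) (x : Fin n → X) : ∑ y, Wn W n x y = 1 := by
  simp only [Wn, sum_prod_apply_eq, hW.2, prod_const_one]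

lemma IsChannel.sum_Wn_mem_Icc (hW : IsChannel W) (x : Fin n → X) (D : Finset (Fin n → Y)) :
    ∑ y ∈ D, Wn W n x y ∈ Set.Icc 0 1 :=
  ⟨sum_nonneg fun _ _ => hW.Wn_nonneg _ _, hW.sum_Wn x ▸
    sum_le_sum_of_subset_of_nonneg (subset_univ D) fun _ _ _ => hW.Wn_nonneg _ _⟩

end Channel

section InformationDensity

variable {X Y : Type*} [Fintype X] {P : X → ℝ} {W : X → Y → ℝ} {n : ℕ} {θ : ℝ}

/-- The output distribution `PW` of the channel `W` with input distribution `P`. -/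
def outputDist (P : X → ℝ) (W : X → Y → ℝ) (y : Y) : ℝ := ∑ x, P x * W x y

lemma sum_iidProb_mul_Wn (P : X → ℝ) (W : X → Y → ℝ) (y : Fin n → Y) :
    ∑ x, iidProb P x * Wn W n x y = iidProb (outputDist P W) y :=
  sum_iidProb_mul_prod P fun i x => W x (y i)

/-- The transition weights of `W` tilted by the exponential of `s` times the amount by which the
information density falls short of `θ`, as in Chernoff's method. -/
def tiltedChannel (P : X → ℝ) (W : X → Y → ℝ) (θ s : ℝ) (x : X) (y : Y) : ℝ :=
  W x y * Real.exp (s * (θ - Real.log (W x y / outputDist P W y)))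

lemma prod_tiltedChannel (P : X → ℝ) (W : X → Y → ℝ) (θ s : ℝ) (x : Fin n → X) (y : Fin n → Y) :
    ∏ i, tiltedChannel P W θ s (x i) (y i) = Wn W n x y *
      Real.exp (s * (n * θ - ∑ i, Real.log (W (x i) (y i) / outputDist P W (y i)))) := by
  simp [tiltedChannel, Wn, prod_mul_distrib, ← Real.exp_sum, ← mul_sum]

variable [Fintype Y]

/-- The output sequences whose information density `log (Wⁿ(𝐲|𝐱) / (PW)ⁿ(𝐲))` with `x` is at
least `n * θ`; the inequality is stated without logarithms and divisions to avoid a separate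
treatment of sequences of probability zero. -/
def typicalOutputs (P : X → ℝ) (W : X → Y → ℝ) (θ : ℝ) (n : ℕ) (x : Fin n → X) :
    Finset (Fin n → Y) :=
  {y | Real.exp (n * θ) * iidProb (outputDist P W) y ≤ Wn W n x y}

lemma outputDist_nonneg (hP : IsPMF P) (hW : IsChannel W) (y : Y) : 0 ≤ outputDist P W y :=
  sum_nonneg fun x _ => mul_nonneg (hP.1 x) (hW.1 x y)

lemma sum_typicalOutputs_le (P : X → ℝ) (hW : IsChannel W) (x : Fin n → X) :
    ∑ y ∈ typicalOutputs P W θ n x, iidProb (outputDist P W) y ≤ Real.exp (-(n * θ)) := by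
  calc ∑ y ∈ typicalOutputs P W θ n x, iidProb (outputDist P W) y
      ≤ ∑ y ∈ typicalOutputs P W θ n x, Real.exp (-(n * θ)) * Wn W n x y := by
        gcongr with y hy
        rw [Real.exp_neg, ← div_eq_inv_mul, le_div_iff₀' (Real.exp_pos _)]
        exact (mem_filter.1 hy).2
    _ = Real.exp (-(n * θ)) * ∑ y ∈ typicalOutputs P W θ n x, Wn W n x y := (mul_sum ..).symm
    _ ≤ Real.exp (-(n * θ)) :=
        mul_le_of_le_one_right (Real.exp_pos _).le (hW.sum_Wn_mem_Icc x _).2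

/-- The decoding set of a message that is carried by the codewords with indices in `A`: the output
sequences that are typical for one of these codewords. -/
def decodingSet {V : Type*} (P : X → ℝ) (W : X → Y → ℝ) (θ : ℝ) (c : V → Fin n → X)
    (A : Finset V) : Finset (Fin n → Y) :=
  A.biUnion fun v => typicalOutputs P W θ n (c v)

lemma dependsOn_decodingSet {V : Type*} (P : X → ℝ) (W : X → Y → ℝ) (θ : ℝ) (A : Finset V) :
    DependsOn (fun c : V → Fin n → X => decodingSet P W θ c A) A := fun c c' h =>
  biUnion_congr rfl fun u hu => by rw [h u hu]

lemma sum_iidProb_mul_sum_decodingSet_le {V : Type*} (hW : IsChannel W) (hP : IsPMF P)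
    (c : V → Fin n → X) (A : Finset V) :
    ∑ x, iidProb P x * ∑ y ∈ decodingSet P W θ c A, Wn W n x y ≤ #A * Real.exp (-(n * θ)) := by
  calc ∑ x, iidProb P x * ∑ y ∈ decodingSet P W θ c A, Wn W n x y
      = ∑ y ∈ decodingSet P W θ c A, iidProb (outputDist P W) y := by
        simp only [mul_sum]
        rw [sum_comm]
        simp only [sum_iidProb_mul_Wn]
    _ ≤ ∑ v ∈ A, ∑ y ∈ typicalOutputs P W θ n (c v), iidProb (outputDist P W) y :=
        sum_biUnion_le (fun y => prod_nonneg fun i _ => outputDist_nonneg hP hW (y i)) _ _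
    _ ≤ ∑ _v ∈ A, Real.exp (-(n * θ)) := sum_le_sum fun v _ => sum_typicalOutputs_le P hW (c v)
    _ = #A * Real.exp (-(n * θ)) := by rw [sum_const, nsmul_eq_mul]

lemma mutInf_eq_sum (P : X → ℝ) (W : X → Y → ℝ) :
    mutInf P W = ∑ x, ∑ y, P x * W x y * Real.log (W x y / outputDist P W y) := by
  unfold mutInf outputDist
  refine sum_congr rfl fun x _ => sum_congr rfl fun y _ => ?_
  split_ifs with h
  · rw [h, zero_mul]
  · rfl

lemma sum_sum_mul_channel (hW : IsChannel W) (hP : IsPMF P) : ∑ x, ∑ y, P x * W x y = 1 := by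
  simp only [← mul_sum, hW.2, mul_one, hP.2]

lemma hasDerivAt_sum_tiltedChannel (hW : IsChannel W) (hP : IsPMF P) (θ : ℝ) :
    HasDerivAt (fun s => ∑ x, ∑ y, P x * tiltedChannel P W θ s x y) (θ - mutInf P W) 0 := by
  have hderiv : θ - mutInf P W =
      ∑ x, ∑ y, P x * (W x y * (θ - Real.log (W x y / outputDist P W y))) := by
    simp only [mutInf_eq_sum, ← mul_assoc, mul_sub, sum_sub_distrib]
    simp only [← sum_mul, sum_sum_mul_channel hW hP, one_mul]
  rw [hderiv]
  refine HasDerivAt.fun_sum fun x _ => HasDerivAt.fun_sum fun y _ =>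
    HasDerivAt.const_mul _ (HasDerivAt.const_mul _ ?_)
  simpa using ((hasDerivAt_id (0 : ℝ)).mul_const (θ - Real.log (W x y / outputDist P W y))).exp

lemma exists_sum_tiltedChannel_lt_one (hW : IsChannel W) (hP : IsPMF P) (hθ : θ < mutInf P W) :
    ∃ s : ℝ, 0 < s ∧ ∑ x, ∑ y, P x * tiltedChannel P W θ s x y < 1 := by
  have hslope := (hasDerivAt_sum_tiltedChannel hW hP θ).tendsto_slope_zero_right
  obtain ⟨s, hslope_neg, hs⟩ :=
    ((hslope.eventually_lt_const (sub_neg.2 hθ)).and self_mem_nhdsWithin).exists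
  have hs : 0 < s := hs
  refine ⟨s, hs, ?_⟩
  have hzero : ∑ x, ∑ y, P x * tiltedChannel P W θ 0 x y = 1 := by
    simp [tiltedChannel, sum_sum_mul_channel hW hP]
  rw [zero_add, hzero, smul_eq_mul] at hslope_neg
  exact sub_neg.1 (neg_of_mul_neg_right hslope_neg (inv_pos.2 hs).le)

lemma Wn_le_prod_tiltedChannel (hW : IsChannel W) {s : ℝ} (hs : 0 ≤ s)
    {x : Fin n → X} {y : Fin n → Y} (hy : y ∉ typicalOutputs P W θ n x) :
    Wn W n x y ≤ ∏ i, tiltedChannel P W θ s (x i) (y i) := by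
  have hlt : Wn W n x y < Real.exp (n * θ) * iidProb (outputDist P W) y := by
    simpa [typicalOutputs] using hy
  rw [prod_tiltedChannel]
  rcases (hW.Wn_nonneg x y).eq_or_lt with h0 | hpos
  · simp [← h0]
  have hOpos : 0 < iidProb (outputDist P W) y :=
    pos_of_mul_pos_right (hpos.trans hlt) (Real.exp_pos _).le
  have hWi (i : Fin n) : W (x i) (y i) ≠ 0 := prod_ne_zero_iff.1 hpos.ne' i (mem_univ i)
  have hOi (i : Fin n) : outputDist P W (y i) ≠ 0 := prod_ne_zero_iff.1 hOpos.ne' i (mem_univ i)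
  refine le_mul_of_one_le_right hpos.le (Real.one_le_exp (mul_nonneg hs (sub_nonneg.2 ?_)))
  calc ∑ i, Real.log (W (x i) (y i) / outputDist P W (y i))
      = Real.log (Wn W n x y / iidProb (outputDist P W) y) := by
        rw [Wn, iidProb, ← prod_div_distrib, Real.log_prod fun i _ => div_ne_zero (hWi i) (hOi i)]
    _ ≤ Real.log (Real.exp (n * θ)) :=
        Real.log_le_log (div_pos hpos hOpos) ((div_le_iff₀ hOpos).2 hlt.le)
    _ = n * θ := Real.log_exp _

lemma sum_compl_typicalOutputs_le_pow (hW : IsChannel W) (hP : IsPMF P) {s : ℝ} (hs : 0 ≤ s) :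
    ∑ x, iidProb P x * ∑ y ∈ (typicalOutputs P W θ n x)ᶜ, Wn W n x y
      ≤ (∑ x, ∑ y, P x * tiltedChannel P W θ s x y) ^ n := by
  have htilt0 (x : Fin n → X) (y : Fin n → Y) : 0 ≤ ∏ i, tiltedChannel P W θ s (x i) (y i) :=
    prod_nonneg fun _ _ => mul_nonneg (hW.1 _ _) (Real.exp_pos _).le
  calc ∑ x, iidProb P x * ∑ y ∈ (typicalOutputs P W θ n x)ᶜ, Wn W n x y
      ≤ ∑ x : Fin n → X, iidProb P x *
          ∑ y : Fin n → Y, ∏ i, tiltedChannel P W θ s (x i) (y i) := by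
        gcongr with x _
        · exact hP.iidProb.1 x
        · exact (sum_le_sum fun y hy => Wn_le_prod_tiltedChannel hW hs (mem_compl.1 hy)).trans
            (sum_le_sum_of_subset_of_nonneg (subset_univ _) fun y _ _ => htilt0 x y)
    _ = ∏ _i : Fin n, ∑ x, P x * ∑ y, tiltedChannel P W θ s x y := by
        simp only [sum_prod_apply_eq]
        exact sum_iidProb_mul_prod P fun _ x => ∑ y, tiltedChannel P W θ s x y
    _ = (∑ x, ∑ y, P x * tiltedChannel P W θ s x y) ^ n := by
        simp only [mul_sum, prod_const, card_univ, Fintype.card_fin]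

lemma exists_sum_compl_typicalOutputs_le_exp (hW : IsChannel W) (hP : IsPMF P)
    (hθ : θ < mutInf P W) :
    ∃ γ : ℝ, 0 < γ ∧ ∀ n : ℕ,
      ∑ x, iidProb P x * ∑ y ∈ (typicalOutputs P W θ n x)ᶜ, Wn W n x y
        ≤ Real.exp (-(n * γ)) := by
  obtain ⟨s, hs, hlt⟩ := exists_sum_tiltedChannel_lt_one hW hP hθ
  set φ := ∑ x, ∑ y, P x * tiltedChannel P W θ s x y
  have hφ0 : 0 ≤ φ := sum_nonneg fun x _ => sum_nonneg fun y _ =>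
    mul_nonneg (hP.1 x) (mul_nonneg (hW.1 x y) (Real.exp_pos _).le)
  -- `φ` may vanish, so the exponent is taken from a larger base.
  obtain ⟨ρ, hφρ, hρ1⟩ := exists_between hlt
  have hρ0 : 0 < ρ := hφ0.trans_lt hφρ
  refine ⟨-Real.log ρ, neg_pos.2 (Real.log_neg hρ0 hρ1), fun n => ?_⟩
  calc _ ≤ φ ^ n := sum_compl_typicalOutputs_le_pow hW hP hs.le
    _ ≤ ρ ^ n := by gcongr
    _ = Real.exp (-(n * -Real.log ρ)) := by
        rw [mul_neg, neg_neg, Real.exp_nat_mul, Real.exp_log hρ0]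

end InformationDensity

section Codebook

variable {V M M' X Y : Type*} [DecidableEq V] [Fintype X] [Fintype Y]
  {P : X → ℝ} {W : X → Y → ℝ} {n N : ℕ} {θ μ ε l : ℝ} {A : M → Finset V}

/-- The codeword index `v m m'` of the message pair `(m, m')`, as seen by the receiver of `m`:
over a uniform `m'` it is uniformly distributed on the `N`-element set `A m`, and the sets of
different messages share at most the fraction `ε` of their elements. -/
structure IsIndexing [Fintype M'] (v : M → M' → V) (A : M → Finset V) (N : ℕ) (ε : ℝ) :
    Prop where
  card_eq : ∀ m, #(A m) = N
  card_inter_le : ∀ m m', m ≠ m' → (#(A m ∩ A m') : ℝ) ≤ ε * N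
  average_eq : ∀ m (g : V → ℝ),
    (Fintype.card M' : ℝ)⁻¹ * ∑ m', g (v m m') = (N : ℝ)⁻¹ * ∑ u ∈ A m, g u

lemma IsIndexing.mono [Fintype M'] {v : M → M' → V} {ε' : ℝ} (h : IsIndexing v A N ε)
    (hε : ε ≤ ε') : IsIndexing v A N ε' where
  card_eq := h.card_eq
  card_inter_le m m' hm := (h.card_inter_le m m' hm).trans (by gcongr)
  average_eq := h.average_eq

lemma IsIndexing.comp_equiv [Fintype M'] {L L' : Type*} [Fintype L'] {v : M → M' → V}
    (h : IsIndexing v A N ε) (e : L ≃ M) (e' : L' ≃ M') :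
    IsIndexing (fun m m' => v (e m) (e' m')) (fun m => A (e m)) N ε where
  card_eq m := h.card_eq (e m)
  card_inter_le m m' hm := h.card_inter_le _ _ (e.injective.ne hm)
  average_eq m g := by
    rw [← h.average_eq, Fintype.card_congr e', e'.sum_comp fun m' => g (v (e m) m')]

/-- The law of the deterministic codeword `w m m'` when `m'` is a uniform message; it is the input
distribution that the receiver of `m` faces. -/
def mixture [Fintype M'] (w : M → M' → Fin n → X) (m : M) (x : Fin n → X) : ℝ :=
  (Fintype.card M' : ℝ)⁻¹ * ∑ m', if x = w m m' then 1 else 0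

lemma IsIndexing.sum_mixture_mul [Fintype M'] {v : M → M' → V} (h : IsIndexing v A N ε)
    (c : V → Fin n → X) (m : M) (G : (Fin n → X) → ℝ) :
    ∑ x, mixture (fun m m' => c (v m m')) m x * G x = (N : ℝ)⁻¹ * ∑ u ∈ A m, G (c u) := by
  rw [← h.average_eq m fun u => G (c u)]
  simp only [mixture, mul_assoc, ← mul_sum, sum_mul]
  rw [sum_comm]
  simp

/-- The codebook `c` is reliable at level `t` for the index sets `A`: for every message the total
probability of the atypical outputs of its codewords, and for every pair of messages the total
probability of entering the decoding set of the second through codewords of the first alone, are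
at most `t`. -/
def IsReliable (P : X → ℝ) (W : X → Y → ℝ) (θ : ℝ) (A : M → Finset V) (t : ℝ)
    (c : V → Fin n → X) : Prop :=
  (∀ m, ∑ v ∈ A m, ∑ y ∈ (typicalOutputs P W θ n (c v))ᶜ, Wn W n (c v) y ≤ t) ∧
  ∀ m m', ∑ v ∈ A m \ A m', ∑ y ∈ decodingSet P W θ c (A m'), Wn W n (c v) y ≤ t

lemma IsReliable.missed_le {t : ℝ} {c : V → Fin n → X} (hW : IsChannel W)
    (hc : IsReliable P W θ A t c) (m : M) :
    ∑ v ∈ A m, ∑ y ∈ (decodingSet P W θ c (A m))ᶜ, Wn W n (c v) y ≤ t := by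
  refine le_trans ?_ (hc.1 m)
  gcongr with v hv
  · exact fun y _ _ => hW.Wn_nonneg _ y
  · exact subset_biUnion_of_mem (fun u => typicalOutputs P W θ n (c u)) hv

lemma IsReliable.false_le {t : ℝ} {c : V → Fin n → X} (hW : IsChannel W)
    (hc : IsReliable P W θ A t c) (m m' : M) :
    ∑ v ∈ A m, ∑ y ∈ decodingSet P W θ c (A m'), Wn W n (c v) y ≤ t + #(A m ∩ A m') := by
  rw [← sum_inter_add_sum_sdiff (A m) (A m'), add_comm t]
  refine add_le_add ?_ (hc.2 m m')
  calc ∑ v ∈ A m ∩ A m', ∑ y ∈ decodingSet P W θ c (A m'), Wn W n (c v) y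
      ≤ ∑ _v ∈ A m ∩ A m', (1 : ℝ) := sum_le_sum fun v _ => (hW.sum_Wn_mem_Icc _ _).2
    _ = #(A m ∩ A m') := by simp

lemma IsIndexing.idCodeErr [Fintype M'] {v : M → M' → V} (h : IsIndexing v A N ε) (hN : 0 < N)
    (hε : 0 ≤ ε) (hW : IsChannel W) {c : V → Fin n → X}
    (hc : IsReliable P W θ A (3 * μ * N) c) (hl : 3 * μ + ε ≤ l) :
    IDCodeErr n W (mixture fun m m' => c (v m m')) (fun m => decodingSet P W θ c (A m)) l l := by
  have hN' : (0 : ℝ) < N := by exact_mod_cast hN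
  have hεN : 0 ≤ ε * N := by positivity
  have hlN : (3 * μ + ε) * N ≤ l * N := by gcongr
  refine ⟨fun m => ?_, fun m m' hm => ?_⟩
  · rw [h.sum_mixture_mul c m fun x => ∑ y ∈ (decodingSet P W θ c (A m))ᶜ, Wn W n x y,
      inv_mul_le_iff₀ hN']
    linarith [hc.missed_le hW m]
  · rw [h.sum_mixture_mul c m fun x => ∑ y ∈ decodingSet P W θ c (A m'), Wn W n x y,
      inv_mul_le_iff₀ hN']
    linarith [hc.false_le hW m m', h.card_inter_le m m' hm]

variable [Fintype V]

lemma sum_iidProb_missed_le (hW : IsChannel W) (hP : IsPMF P)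
    (hmiss : ∑ x, iidProb P x * ∑ y ∈ (typicalOutputs P W θ n x)ᶜ, Wn W n x y ≤ μ) (hμ : 0 ≤ μ)
    {B : Finset V} (hB : #B ≤ N) :
    ∑ c : V → Fin n → X with 3 * μ * N <
        ∑ v ∈ B, ∑ y ∈ (typicalOutputs P W θ n (c v))ᶜ, Wn W n (c v) y, iidProb (iidProb P) c
      ≤ Real.exp (-(μ * N)) :=
  sum_iidProb_lt_sum_le_exp hP.iidProb (fun _ _ _ => rfl)
    (fun _ x => hW.sum_Wn_mem_Icc x (typicalOutputs P W θ n x)ᶜ) (fun _ => hmiss) hμ hB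

lemma sum_iidProb_false_le (hW : IsChannel W) (hP : IsPMF P)
    {B B' : Finset V} (hfalse : #B' * Real.exp (-(n * θ)) ≤ μ) (hB : #B ≤ N) :
    ∑ c : V → Fin n → X with 3 * μ * N <
        ∑ v ∈ B \ B', ∑ y ∈ decodingSet P W θ c B', Wn W n (c v) y, iidProb (iidProb P) c
      ≤ Real.exp (-(μ * N)) := by
  refine sum_iidProb_lt_sum_le_exp hP.iidProb
    (g := fun c x => ∑ y ∈ decodingSet P W θ c B', Wn W n x y) (fun c c' h => ?_)
    (fun c x => hW.sum_Wn_mem_Icc x _)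
    (fun c => (sum_iidProb_mul_sum_decodingSet_le hW hP c B').trans hfalse)
    (le_trans (by positivity) hfalse) ((card_le_card sdiff_subset).trans hB)
  have hset : decodingSet P W θ c B' = decodingSet P W θ c' B' :=
    dependsOn_decodingSet P W θ B' fun u hu => h u fun hu' => (mem_sdiff.1 hu').2 hu
  simp only [hset]

lemma sum_not_isReliable_le [Fintype M] (hW : IsChannel W) (hP : IsPMF P)
    (hA : ∀ m, #(A m) = N)
    (hmiss : ∑ x, iidProb P x * ∑ y ∈ (typicalOutputs P W θ n x)ᶜ, Wn W n x y ≤ μ)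
    (hfalse : N * Real.exp (-(n * θ)) ≤ μ) :
    ∑ c : V → Fin n → X with ¬ IsReliable P W θ A (3 * μ * N) c, iidProb (iidProb P) c
      ≤ (Fintype.card M + Fintype.card M ^ 2) * Real.exp (-(μ * N)) := by
  let excess : M ⊕ M × M → (V → Fin n → X) → ℝ := Sum.elim
    (fun m c => ∑ v ∈ A m, ∑ y ∈ (typicalOutputs P W θ n (c v))ᶜ, Wn W n (c v) y)
    (fun m c => ∑ v ∈ A m.1 \ A m.2, ∑ y ∈ decodingSet P W θ c (A m.2), Wn W n (c v) y)
  have hexcess (i : M ⊕ M × M) :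
      ∑ c with 3 * μ * N < excess i c, iidProb (iidProb P) c ≤ Real.exp (-(μ * N)) :=
    match i with
    | .inl m => sum_iidProb_missed_le hW hP hmiss (le_trans (by positivity) hfalse) (hA m).le
    | .inr (m, m') => sum_iidProb_false_le hW hP (hA m' ▸ hfalse) (hA m).le
  have hnot (c : V → Fin n → X) :
      ¬ IsReliable P W θ A (3 * μ * N) c ↔ ∃ i, 3 * μ * N < excess i c := by
    simp only [IsReliable, excess, not_and_or, not_forall, not_le, Sum.exists, Prod.exists,
      Sum.elim_inl, Sum.elim_inr]
  calc ∑ c : V → Fin n → X with ¬ IsReliable P W θ A (3 * μ * N) c, iidProb (iidProb P) c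
      = ∑ c with ∃ i, 3 * μ * N < excess i c, iidProb (iidProb P) c := by simp only [hnot]
    _ ≤ ∑ i, ∑ c with 3 * μ * N < excess i c, iidProb (iidProb P) c :=
        sum_filter_exists_le hP.iidProb.iidProb.1 _
    _ ≤ ∑ _i : M ⊕ M × M, Real.exp (-(μ * N)) := sum_le_sum fun i _ => hexcess i
    _ = (Fintype.card M + Fintype.card M ^ 2) * Real.exp (-(μ * N)) := by
        simp [sq]

end Codebook

section Averages

variable {M T H : Type*} [Fintype M] [Fintype T]

lemma average_comp_of_card_fiber_eq [DecidableEq T] [Nonempty M] {φ : M → T} {k : ℕ}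
    (hφ : ∀ t, #{m | φ m = t} = k) (g : T → ℝ) :
    (Fintype.card M : ℝ)⁻¹ * ∑ m, g (φ m) = (Fintype.card T : ℝ)⁻¹ * ∑ t, g t := by
  have hsum (f : T → ℝ) : ∑ m, f (φ m) = k * ∑ t, f t := by
    simp only [← sum_fiberwise' univ φ f, sum_const, hφ, nsmul_eq_mul, mul_sum]
  have hcard : (Fintype.card M : ℝ) = k * Fintype.card T := by simpa using hsum fun _ => 1
  have hM : (Fintype.card M : ℝ) ≠ 0 := Nat.cast_ne_zero.2 Fintype.card_ne_zero
  have hk : (k : ℝ) ≠ 0 := left_ne_zero_of_mul (hcard ▸ hM)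
  rw [hsum, hcard, mul_inv_rev, mul_assoc, inv_mul_cancel_left₀ hk]

lemma card_fiber_mul_card_of_surjective {Φ : Type*} [Fintype H] [DecidableEq H] [AddGroup M]
    [AddGroup H] [FunLike Φ M H] [AddMonoidHomClass Φ M H] {f : Φ}
    (hf : Function.Surjective f) (y : H) :
    #{m | f m = y} * Fintype.card H = Fintype.card M := by
  have hfiber (z : H) : #{m | f m = z} = #{m | f m = y} :=
    AddMonoidHom.card_fiber_eq_of_mem_range f (hf z) (hf y)
  calc #{m | f m = y} * Fintype.card H = ∑ z : H, #{m | f m = z} := by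
        simp only [hfiber, sum_const, card_univ, smul_eq_mul, mul_comm]
    _ = Fintype.card M := (card_eq_sum_card_fiberwise fun _ _ => mem_coe.2 (mem_univ _)).symm

lemma average_comp_of_fiber_eq_fiber {Φ : Type*} [Finite H] [AddGroup M] [AddGroup H]
    [FunLike Φ M H] [AddMonoidHomClass Φ M H] {φ : M → T} {f : T → Φ} {y : T → H}
    (hf : ∀ t, Function.Surjective (f t)) (hφ : ∀ t m, φ m = t ↔ f t m = y t) (g : T → ℝ) :
    (Fintype.card M : ℝ)⁻¹ * ∑ m, g (φ m) = (Fintype.card T : ℝ)⁻¹ * ∑ t, g t := by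
  have := Fintype.ofFinite H
  refine average_comp_of_card_fiber_eq (k := Fintype.card M / Fintype.card H) (fun t => ?_) g
  simp only [hφ, ← card_fiber_mul_card_of_surjective (hf t) (y t)]
  exact (Nat.mul_div_cancel _ Fintype.card_pos).symm

end Averages

section LowDegreePolynomials

open MvPolynomial

variable {σ F : Type*} [Field F] {d : ℕ}

/-- Evaluation at `u` of the polynomials of degree at most `d` in each variable. -/
def evalAt (d : ℕ) (u : σ → F) : restrictDegree σ F d →ₗ[F] F :=
  (aeval u).toLinearMap ∘ₗ (restrictDegree σ F d).subtype

/-- The coefficients of the linear monomials of a polynomial. -/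
def linCoeff : restrictDegree σ F d →ₗ[F] σ → F :=
  LinearMap.pi (fun i => lcoeff F (Finsupp.single i 1)) ∘ₗ (restrictDegree σ F d).subtype

lemma C_mem_restrictDegree (t : F) : (C t : MvPolynomial σ F) ∈ restrictDegree σ F d :=
  (monomial_mem_restrictSupport F).2 (.inl fun _ => Nat.zero_le d)

lemma X_mem_restrictDegree (hd : 1 ≤ d) (i : σ) :
    (X i : MvPolynomial σ F) ∈ restrictDegree σ F d :=
  (monomial_mem_restrictSupport F).2 <| .inl fun j => by
    rw [Finsupp.single_apply]
    split_ifs <;> omega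

lemma exists_linCoeff_eq_and_evalAt_eq [Finite σ] (hd : 1 ≤ d) (u s : σ → F) (t : F) :
    ∃ p : restrictDegree σ F d, linCoeff p = s ∧ evalAt d u p = t := by
  have := Fintype.ofFinite σ
  have hlin : ∑ i, s i • (X i : MvPolynomial σ F) ∈ restrictDegree σ F d :=
    sum_mem fun i _ => Submodule.smul_mem _ _ (X_mem_restrictDegree hd i)
  refine ⟨⟨_, add_mem hlin (C_mem_restrictDegree (t - ∑ i, s i * u i))⟩, funext fun i => ?_, ?_⟩
  · simp [linCoeff, coeff_sum, coeff_X, coeff_C, Finsupp.single_left_inj,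
      (Finsupp.single_ne_zero.2 one_ne_zero).symm]
  · simp [evalAt]

instance [Finite σ] [Finite F] : Finite (restrictDegree σ F d) := Module.finite_of_finite F

variable [Fintype σ] [Fintype F]

instance : Fintype (restrictDegree σ F d) := Fintype.ofFinite _

lemma card_restrictDegree :
    Fintype.card (restrictDegree σ F d) = Fintype.card F ^ (d + 1) ^ Fintype.card σ := by
  have hexp : Nat.card {s : σ →₀ ℕ | ∀ i, s i ≤ d} = (d + 1) ^ Fintype.card σ := by
    let e : {s : σ →₀ ℕ // ∀ i, s i ≤ d} ≃ (σ → {k : ℕ // k ≤ d}) :=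
      (Finsupp.equivFunOnFinite.subtypeEquiv fun _ => Iff.rfl).trans
        (Equiv.subtypePiEquivPi (p := fun _ k => k ≤ d))
    have hIic : Nat.card {k : ℕ // k ≤ d} = d + 1 :=
      (Nat.subtype_card (Iic d) fun _ => mem_Iic).trans (Nat.card_Iic d)
    rw [Set.coe_ofPred, Nat.card_congr e, Nat.card_fun, hIic, Nat.card_eq_fintype_card]
  rw [Module.card_eq_pow_finrank (K := F)]
  congr 1
  rw [← hexp]
  exact Module.finrank_eq_nat_card_basis (basisRestrictSupport F {s : σ →₀ ℕ | ∀ i, s i ≤ d})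

lemma card_eval_eq_zero_le_of_fin [DecidableEq F] {r : ℕ} {p : MvPolynomial (Fin r) F} (hp : p ≠ 0)
    (hpd : ∀ i, p.degreeOf i ≤ d) :
    #{u | eval u p = 0} * Fintype.card F ≤ r * d * Fintype.card F ^ r := by
  have hF : (0 : ℚ≥0) < Fintype.card F := by exact_mod_cast Fintype.card_pos
  have hsz : (#{u | eval u p = 0} : ℚ≥0) / Fintype.card F ^ r ≤ r * d / Fintype.card F :=
    calc (#{u | eval u p = 0} : ℚ≥0) / Fintype.card F ^ r
        ≤ ∑ i, (p.degreeOf i / Fintype.card F : ℚ≥0) := by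
          simpa using schwartz_zippel_sum_degreeOf hp fun _ => (univ : Finset F)
      _ ≤ ∑ _i : Fin r, (d / Fintype.card F : ℚ≥0) := by
          gcongr with i
          exact hpd i
      _ = r * d / Fintype.card F := by simp [mul_div_assoc]
  rw [div_le_div_iff₀ (by positivity) hF] at hsz
  exact_mod_cast hsz

lemma card_evalAt_eq_zero_le [DecidableEq σ] [DecidableEq F] {p : restrictDegree σ F d}
    (hp : p ≠ 0) :
    #{u | evalAt d u p = 0} * Fintype.card F
      ≤ Fintype.card σ * d * Fintype.card F ^ Fintype.card σ := by
  let e := Fintype.equivFin σ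
  have hrename : rename e p.1 ≠ 0 :=
    (map_ne_zero_iff _ (rename_injective e e.injective)).2 (Subtype.coe_ne_coe.2 hp)
  have hdeg (i : Fin (Fintype.card σ)) : (rename e p.1).degreeOf i ≤ d := by
    rw [← e.apply_symm_apply i, degreeOf_rename_of_injective e.injective]
    exact degreeOf_le_iff.2 fun s hs => (mem_restrictDegree _ _ _).1 p.2 s hs _
  have hcard : #{u | evalAt d u p = 0} = #{v | eval v (rename e p.1) = 0} :=
    card_equiv (e.arrowCongr (Equiv.refl F)) fun u => by
      rw [mem_filter_univ, mem_filter_univ]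
      simp [evalAt, eval_rename, Function.comp_def, aeval_eq_eval]
  rw [hcard]
  exact card_eval_eq_zero_le_of_fin hrename hdeg

end LowDegreePolynomials

section CrossIndexing

open MvPolynomial

variable {σ ι F : Type*} [Field F] {d : ℕ}

/-- The point over `s` of the graph of the vector `b` of polynomials. -/
def liftPoint (b : ι → restrictDegree σ F d) (s : σ → F) : σ ⊕ ι → F :=
  Sum.elim s fun i => evalAt d s (b i)

lemma liftPoint_eq_iff {b : ι → restrictDegree σ F d} {s : σ → F} {u : σ ⊕ ι → F} :
    liftPoint b s = u ↔ s = u ∘ Sum.inl ∧ ∀ i, evalAt d (u ∘ Sum.inl) (b i) = u (Sum.inr i) := by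
  constructor
  · rintro rfl
    simp [liftPoint]
  · rintro ⟨rfl, h⟩
    ext (k | i) <;> simp [liftPoint, h]

lemma liftPoint_injective (b : ι → restrictDegree σ F d) : Function.Injective (liftPoint b) :=
  fun s s' h => (liftPoint_eq_iff.1 h).1.trans (by simp [liftPoint])

/-- The index of the codeword sent for the message pair `(a, b)`: a point of the graph of `a` that
lies over the graph of `b`. The point of the base is the sum of linear coefficients of `a` and of
one component of `b`, so that it is uniform when either message is. -/
def crossIndex (i₀ : ι) (a : restrictDegree (σ ⊕ ι) F d) (b : ι → restrictDegree σ F d) :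
    (σ ⊕ ι → F) × F :=
  let u := liftPoint b (linCoeff a ∘ Sum.inl + linCoeff (b i₀))
  (u, evalAt d u a)

lemma graph_injective (a : restrictDegree (σ ⊕ ι) F d) :
    Function.Injective fun u => (u, evalAt d u a) :=
  fun _ _ h => congrArg Prod.fst h

lemma cylinder_injective (b : ι → restrictDegree σ F d) :
    Function.Injective fun x : (σ → F) × F => (liftPoint b x.1, x.2) :=
  (liftPoint_injective b).prodMap Function.injective_id

variable [Fintype σ] [Fintype ι] [Fintype F] [DecidableEq σ]

lemma average_comp_liftPoint [DecidableEq ι] (hd : 1 ≤ d) (i₀ : ι) (s : σ → F)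
    (g : (σ ⊕ ι → F) → ℝ) :
    (Fintype.card (ι → restrictDegree σ F d) : ℝ)⁻¹ *
        ∑ b : ι → restrictDegree σ F d, g (liftPoint b (s + linCoeff (b i₀)))
      = (Fintype.card (σ ⊕ ι → F) : ℝ)⁻¹ * ∑ u, g u := by
  let f (u : σ ⊕ ι → F) : (ι → restrictDegree σ F d) →ₗ[F] (σ → F) × (ι → F) :=
    (linCoeff ∘ₗ LinearMap.proj i₀).prod
      (LinearMap.pi fun i => evalAt d (u ∘ Sum.inl) ∘ₗ LinearMap.proj i)
  refine average_comp_of_fiber_eq_fiber (f := f)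
    (φ := fun b => liftPoint b (s + linCoeff (b i₀)))
    (y := fun u => (u ∘ Sum.inl - s, u ∘ Sum.inr)) (fun u ⟨t, t'⟩ => ?_) (fun u b => ?_) g
  · choose c hclin hceval using
      fun i => exists_linCoeff_eq_and_evalAt_eq hd (u ∘ Sum.inl) t (t' i)
    exact ⟨c, Prod.ext (hclin i₀) (funext hceval)⟩
  · rw [liftPoint_eq_iff, Prod.ext_iff, funext_iff (g := u ∘ Sum.inr)]
    exact and_congr_left' eq_sub_iff_add_eq'.symm

lemma average_comp_linCoeff_evalAt (hd : 1 ≤ d) (b : ι → restrictDegree σ F d) (s : σ → F)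
    (g : (σ → F) × F → ℝ) :
    (Fintype.card (restrictDegree (σ ⊕ ι) F d) : ℝ)⁻¹ *
        ∑ a : restrictDegree (σ ⊕ ι) F d,
          g (linCoeff a ∘ Sum.inl + s, evalAt d (liftPoint b (linCoeff a ∘ Sum.inl + s)) a)
      = (Fintype.card ((σ → F) × F) : ℝ)⁻¹ * ∑ x, g x := by
  let f (x : (σ → F) × F) : restrictDegree (σ ⊕ ι) F d →ₗ[F] (σ → F) × F :=
    (LinearMap.funLeft F F Sum.inl ∘ₗ linCoeff).prod (evalAt d (liftPoint b x.1))
  refine average_comp_of_fiber_eq_fiber (f := f) (y := fun x => (x.1 - s, x.2))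
    (φ := fun a => (linCoeff a ∘ Sum.inl + s,
      evalAt d (liftPoint b (linCoeff a ∘ Sum.inl + s)) a))
    (fun x ⟨t, t'⟩ => ?_) (fun x a => ?_) g
  · obtain ⟨p, hplin, hpeval⟩ :=
      exists_linCoeff_eq_and_evalAt_eq hd (liftPoint b x.1) (Sum.elim t 0) t'
    exact ⟨p, Prod.ext (by simp [f, hplin, LinearMap.funLeft, Sum.elim_comp_inl]) hpeval⟩
  · obtain ⟨t, t'⟩ := x
    rw [Prod.mk.injEq, LinearMap.prod_apply, Function.prod, Prod.mk.injEq, eq_sub_iff_add_eq]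
    exact and_congr_right fun h => by rw [h]

variable [DecidableEq F]

/-- The cylinder over the graph of a vector of polynomials: the codeword indices used for a message
of the second receiver. -/
def cylinder (b : ι → restrictDegree σ F d) : Finset ((σ ⊕ ι → F) × F) :=
  univ.image fun x : (σ → F) × F => (liftPoint b x.1, x.2)

lemma card_cylinder_inter_mul_le {b b' : ι → restrictDegree σ F d} (h : b ≠ b') :
    #(cylinder b ∩ cylinder b') * Fintype.card F ≤
      Fintype.card σ * d * Fintype.card ((σ → F) × F) := by
  obtain ⟨i, hi⟩ := Function.ne_iff.1 h
  have hsub : cylinder b ∩ cylinder b' ⊆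
      (({s | evalAt d s (b i - b' i) = 0} : Finset _) ×ˢ univ).image
        fun x : (σ → F) × F => (liftPoint b x.1, x.2) := by
    intro x hx
    simp only [cylinder, mem_inter, mem_image, mem_univ, true_and] at hx
    obtain ⟨⟨⟨s, t⟩, rfl⟩, ⟨s', t'⟩, hx⟩ := hx
    have hi' := (liftPoint_eq_iff.1 (congrArg Prod.fst hx)).2 i
    refine mem_image_of_mem _ (mem_product.2 ⟨?_, mem_univ _⟩)
    simpa [liftPoint, sub_eq_zero] using hi'.symm
  calc #(cylinder b ∩ cylinder b') * Fintype.card F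
      ≤ #{s | evalAt d s (b i - b' i) = 0} * Fintype.card F * Fintype.card F := by
        refine Nat.mul_le_mul_right _ ((card_le_card hsub).trans (card_image_le.trans ?_))
        rw [card_product, card_univ]
    _ ≤ Fintype.card σ * d * Fintype.card F ^ Fintype.card σ * Fintype.card F :=
        Nat.mul_le_mul_right _ (card_evalAt_eq_zero_le (sub_ne_zero.2 hi))
    _ = Fintype.card σ * d * Fintype.card ((σ → F) × F) := by
        rw [Fintype.card_prod, Fintype.card_fun, mul_assoc]

lemma isIndexing_cylinder (hd : 1 ≤ d) (i₀ : ι) :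
    IsIndexing (flip (crossIndex (F := F) (σ := σ) (d := d) i₀)) cylinder
      (Fintype.card ((σ → F) × F)) (Fintype.card σ * d / Fintype.card F) where
  card_eq b := by rw [cylinder, card_image_of_injective _ (cylinder_injective b), card_univ]
  card_inter_le b b' h := by
    rw [div_mul_eq_mul_div, le_div_iff₀ (by exact_mod_cast Fintype.card_pos)]
    exact_mod_cast card_cylinder_inter_mul_le h
  average_eq b g := by
    rw [cylinder, sum_image fun _ _ _ _ h => cylinder_injective b h]
    exact average_comp_linCoeff_evalAt hd b (linCoeff (b i₀)) fun x => g (liftPoint b x.1, x.2)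

variable [DecidableEq ι]

/-- The graph of a polynomial: the codeword indices used for a message of the first receiver. -/
def graph (a : restrictDegree (σ ⊕ ι) F d) : Finset ((σ ⊕ ι → F) × F) :=
  univ.image fun u => (u, evalAt d u a)

lemma card_graph_inter_mul_le {a a' : restrictDegree (σ ⊕ ι) F d} (h : a ≠ a') :
    #(graph a ∩ graph a') * Fintype.card F ≤
      (Fintype.card σ + Fintype.card ι) * d * Fintype.card (σ ⊕ ι → F) := by
  have hsub : graph a ∩ graph a' ⊆
      ({u | evalAt d u (a - a') = 0} : Finset _).image fun u => (u, evalAt d u a) := by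
    rintro ⟨u, t⟩ hut
    simp only [graph, mem_inter, mem_image, mem_univ, true_and, Prod.mk.injEq,
      exists_eq_left] at hut
    exact mem_image.2 ⟨u, by simp [hut], by simp [hut]⟩
  calc #(graph a ∩ graph a') * Fintype.card F
      ≤ #{u | evalAt d u (a - a') = 0} * Fintype.card F :=
        Nat.mul_le_mul_right _ ((card_le_card hsub).trans card_image_le)
    _ ≤ (Fintype.card σ + Fintype.card ι) * d * Fintype.card (σ ⊕ ι → F) := by
        simpa using card_evalAt_eq_zero_le (sub_ne_zero.2 h)

lemma isIndexing_graph (hd : 1 ≤ d) (i₀ : ι) :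
    IsIndexing (crossIndex (F := F) (σ := σ) (d := d) i₀) graph (Fintype.card (σ ⊕ ι → F))
      ((Fintype.card σ + Fintype.card ι) * d / Fintype.card F) where
  card_eq a := by rw [graph, card_image_of_injective _ (graph_injective a), card_univ]
  card_inter_le a a' h := by
    rw [div_mul_eq_mul_div, le_div_iff₀ (by exact_mod_cast Fintype.card_pos)]
    exact_mod_cast card_graph_inter_mul_le h
  average_eq a g := by
    rw [graph, sum_image fun _ _ _ _ h => graph_injective a h]
    exact average_comp_liftPoint hd i₀ (linCoeff a ∘ Sum.inl) fun u => g (u, evalAt d u a)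

end CrossIndexing

lemma exists_isIndexing {q D r j : ℕ} (hq : q.Prime) (hD : 2 ≤ D) (hj : 1 ≤ j) :
    ∃ (V : Type) (_ : Fintype V) (_ : DecidableEq V) (kY kZ : ℕ) (v : Fin kY → Fin kZ → V)
      (A : Fin kY → Finset V) (B : Fin kZ → Finset V),
      kY = q ^ D ^ (r + j) ∧ kZ = q ^ (j * D ^ r) ∧
      IsIndexing v A (q ^ (r + j)) ((r + j : ℕ) * D / q) ∧
      IsIndexing (flip v) B (q ^ (r + 1)) (r * D / q) := by
  have := Fact.mk hq
  obtain ⟨d, rfl⟩ : ∃ d, D = d + 1 := ⟨D - 1, by omega⟩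
  have hd : 1 ≤ d := by omega
  let a := (Fintype.equivFin (MvPolynomial.restrictDegree (Fin r ⊕ Fin j) (ZMod q) d)).symm
  let b := (Fintype.equivFin (Fin j → MvPolynomial.restrictDegree (Fin r) (ZMod q) d)).symm
  refine ⟨(Fin r ⊕ Fin j → ZMod q) × ZMod q, inferInstance, inferInstance, _, _,
    fun m m' => crossIndex ⟨0, hj⟩ (a m) (b m'), fun m => graph (a m), fun m => cylinder (b m),
    ?_, ?_, ?_, ?_⟩
  · simp [card_restrictDegree]
  · simp [card_restrictDegree, ← pow_mul, mul_comm]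
  · have h := (isIndexing_graph (F := ZMod q) (σ := Fin r) hd (⟨0, hj⟩ : Fin j)).comp_equiv a b
    simp only [Fintype.card_fun, Fintype.card_sum, Fintype.card_fin, ZMod.card] at h
    exact h.mono (by push_cast; gcongr; linarith)
  · have h := (isIndexing_cylinder (F := ZMod q) (σ := Fin r) hd (⟨0, hj⟩ : Fin j)).comp_equiv b a
    simp only [Fintype.card_prod, Fintype.card_fun, Fintype.card_fin, ZMod.card, ← pow_succ] at h
    exact h.mono (by push_cast; gcongr; linarith)

section Asymptotics

open Filter Real

variable {α α' β β' θ τ : ℝ} {n D q N K c : ℕ}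

lemma eventually_add_mul_le_exp (a b : ℝ) (hτ : 0 < τ) :
    ∀ᶠ n : ℕ in atTop, a + b * n ≤ exp (n * τ) := by
  have hlin : (fun x : ℝ => a + b * x) =o[atTop] fun x => exp (τ * x) := by
    refine Asymptotics.IsLittleO.add ?_ (Asymptotics.IsLittleO.const_mul_left ?_ b)
    · simpa using (isLittleO_pow_exp_pos_mul_atTop 0 hτ).const_mul_left a
    · simpa using isLittleO_pow_exp_pos_mul_atTop 1 hτ
  filter_upwards [(hlin.comp_tendsto tendsto_natCast_atTop_atTop).bound one_pos] with n hn
  simpa [abs_exp, mul_comm τ] using (le_abs_self _).trans hn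

lemma eventually_exists_prime_mem_Icc_exp (hα : 0 ≤ α) (h : α < α') :
    ∀ᶠ n : ℕ in atTop, ∃ p : ℕ, p.Prime ∧ (p : ℝ) ∈ Set.Icc (exp (n * α)) (exp (n * α')) := by
  filter_upwards [eventually_add_mul_le_exp 4 0 (sub_pos.2 h)] with n hn
  rw [zero_mul, add_zero] at hn
  have hceil := Nat.le_ceil (exp (n * α))
  have hceil' := Nat.ceil_lt_add_one (exp_pos (n * α)).le
  have hone : 1 ≤ exp (n * α) := one_le_exp (by positivity)
  obtain ⟨p, hp, hlt, hle⟩ := Nat.exists_prime_lt_and_le_two_mul ⌈exp (n * α)⌉₊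
    (Nat.ceil_pos.2 (exp_pos _)).ne'
  refine ⟨p, hp, hceil.trans (by exact_mod_cast hlt.le), ?_⟩
  calc (p : ℝ) ≤ 2 * ⌈exp (n * α)⌉₊ := by exact_mod_cast hle
    _ ≤ 4 * exp (n * α) := by linarith
    _ ≤ exp (n * (α' - α)) * exp (n * α) := by gcongr
    _ = exp (n * α') := by rw [← exp_add]; ring_nf

lemma natCast_pow_mul_exp_neg_le (hq : q ≤ exp (n * β)) (h : K * β + τ ≤ θ) :
    ((q ^ K : ℕ) : ℝ) * exp (-(n * θ)) ≤ exp (-(n * τ)) := by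
  calc ((q ^ K : ℕ) : ℝ) * exp (-(n * θ)) ≤ exp (n * β) ^ K * exp (-(n * θ)) := by
        push_cast
        gcongr
    _ = exp (n * (K * β) - n * θ) := by
        rw [← exp_nat_mul, ← exp_add, mul_left_comm, sub_eq_add_neg]
    _ ≤ exp (-(n * τ)) := by
        rw [exp_le_exp, ← mul_sub, ← mul_neg]
        gcongr
        linarith

lemma eventually_add_div_le_exp_neg (hτ : 0 < τ) (h : α + τ ≤ β) (N : ℕ) :
    ∀ᶠ n : ℕ in atTop, ∀ D q : ℕ, D ≤ exp (n * α) → exp (n * β) ≤ q →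
      3 * exp (-(n * τ)) + N * D / q ≤ exp (-(n * (τ / 2))) := by
  filter_upwards [eventually_add_mul_le_exp (3 + N) 0 (half_pos hτ)] with n hn D q hD hq
  rw [zero_mul, add_zero] at hn
  have hDq : (D : ℝ) / q ≤ exp (-(n * τ)) := by
    calc (D : ℝ) / q ≤ exp (n * α) / exp (n * β) := by gcongr
      _ ≤ exp (-(n * τ)) := by
        rw [← exp_sub, exp_le_exp, ← mul_sub, ← mul_neg]
        gcongr
        linarith
  calc 3 * exp (-(n * τ)) + N * D / q ≤ (3 + N) * exp (-(n * τ)) := by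
        rw [mul_div_assoc, add_mul]
        gcongr
    _ ≤ exp (n * (τ / 2)) * exp (-(n * τ)) := by gcongr
    _ = exp (-(n * (τ / 2))) := by rw [← exp_add]; ring_nf

lemma add_sq_mul_exp_neg_lt_half {k t : ℝ} (hk : 1 ≤ k) (ht : 2 * log k + 2 ≤ t) :
    (k + k ^ 2) * exp (-t) < 1 / 2 := by
  have hexp : 4 * k ^ 2 < exp t := by
    calc 4 * k ^ 2 < exp 2 * k ^ 2 := by
          gcongr
          linarith [quadratic_le_exp_of_nonneg zero_le_two]
      _ = exp (2 * log k + 2) := by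
          rw [exp_add, ← log_rpow (by linarith), exp_log (by positivity), rpow_two, mul_comm]
      _ ≤ exp t := exp_le_exp.2 ht
  rw [exp_neg, ← div_eq_mul_inv, div_lt_iff₀ (exp_pos t)]
  nlinarith

lemma log_natCast_pow_mul_pow (q c D N : ℕ) :
    log (q ^ (c * D ^ N) : ℕ) = c * D ^ N * log q := by
  rw [Nat.cast_pow, log_pow]
  push_cast
  rfl

lemma eventually_two_mul_log_add_two_le (hα : 0 ≤ α) (hτ : 0 < τ) (h : α + 2 * τ ≤ β)
    (hN : 1 ≤ N) (hNK : N ≤ K) (β' : ℝ) (c : ℕ) :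
    ∀ᶠ n : ℕ in atTop, ∀ D q : ℕ, D ≤ exp (n * α) → exp (n * β) ≤ q → q ≤ exp (n * β') →
      2 * log (q ^ (c * D ^ N) : ℕ) + 2 ≤ exp (-(n * τ)) * (q ^ K : ℕ) := by
  filter_upwards [eventually_add_mul_le_exp 2 (2 * c * β') hτ] with n hn D q hD hq hq'
  have hq₀ : (0 : ℝ) < q := (exp_pos _).trans_le hq
  have hβ : 0 ≤ β := by linarith
  have hq₁ : (1 : ℝ) ≤ q := (one_le_exp (by positivity)).trans hq
  have hlog : log q ≤ n * β' := (log_le_iff_le_exp hq₀).2 hq'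
  have hexp : n * τ + N * (n * α) ≤ -(n * τ) + N * (n * β) := by
    have hN' : (1 : ℝ) * (2 * τ) ≤ N * (β - α) := by
      gcongr
      · exact_mod_cast hN
      · linarith
    nlinarith
  calc 2 * log (q ^ (c * D ^ N) : ℕ) + 2 = 2 * (c * D ^ N * log q) + 2 := by
        rw [log_natCast_pow_mul_pow]
    _ ≤ 2 * (c * exp (n * α) ^ N * (n * β')) + 2 * exp (n * α) ^ N := by
        gcongr
        exact le_mul_of_one_le_right zero_le_two (one_le_pow₀ (one_le_exp (by positivity)))
    _ = (2 + 2 * c * β' * n) * exp (n * α) ^ N := by ring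
    _ ≤ exp (n * τ) * exp (n * α) ^ N := by gcongr
    _ ≤ exp (-(n * τ)) * exp (n * β) ^ N := by
        simpa only [← exp_nat_mul, ← exp_add, exp_le_exp] using hexp
    _ ≤ exp (-(n * τ)) * q ^ N := by gcongr
    _ ≤ exp (-(n * τ)) * (q ^ K : ℕ) := by
        rw [Nat.cast_pow]
        gcongr

lemma mul_le_inv_mul_log_log (hn : 0 < n) (hD : exp (n * α) ≤ D) (hq : exp 1 ≤ q) (hc : 1 ≤ c) :
    α * N ≤ (1 / n) * log (log (q ^ (c * D ^ N) : ℕ)) := by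
  have hn' : (0 : ℝ) < n := by exact_mod_cast hn
  have hc' : (1 : ℝ) ≤ c := by exact_mod_cast hc
  have hlog : 1 ≤ log q := (le_log_iff_exp_le ((exp_pos 1).trans_le hq)).2 hq
  have hexp : exp (α * N * n) ≤ log (q ^ (c * D ^ N) : ℕ) :=
    calc exp (α * N * n) = exp (n * α) ^ N := by rw [← exp_nat_mul]; ring_nf
      _ ≤ D ^ N := by gcongr
      _ = 1 * D ^ N * 1 := by ring
      _ ≤ c * D ^ N * log q := by gcongr
      _ = log (q ^ (c * D ^ N) : ℕ) := (log_natCast_pow_mul_pow q c D N).symm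
  rw [one_div, ← div_eq_inv_mul, le_div_iff₀ hn', le_log_iff_exp_le ((exp_pos _).trans_le hexp)]
  exact hexp

lemma exists_rate_parameters {RY RZ IY IZ : ℝ} (hRZ0 : 0 < RZ) (hle : RZ ≤ RY) (hRY : RY < IY)
    (hRZ : RZ < IZ) :
    ∃ (r j : ℕ) (α β : ℝ), 1 ≤ r ∧ 1 ≤ j ∧ 0 < α ∧ α < β ∧ RZ ≤ α * r ∧ RY ≤ α * (r + j : ℕ) ∧
      (r + 1 : ℕ) * β < IZ ∧ (r + j : ℕ) * β < IY := by
  have hgap : 0 < min (IY - RY) (IZ - RZ) := lt_min (sub_pos.2 hRY) (sub_pos.2 hRZ)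
  obtain ⟨r, hr⟩ := exists_nat_gt (RZ / min (IY - RY) (IZ - RZ))
  have hr0 : (0 : ℝ) < r := (by positivity : (0 : ℝ) ≤ _).trans_lt hr
  obtain ⟨α, hαr⟩ : ∃ α, α * r = RZ := ⟨RZ / r, div_mul_cancel₀ _ hr0.ne'⟩
  have hα : 0 < α := pos_of_mul_pos_left (hαr ▸ hRZ0) hr0.le
  obtain ⟨hαY, hαZ⟩ : α < IY - RY ∧ α < IZ - RZ := by
    rw [← lt_min_iff, ← mul_lt_mul_iff_left₀ hr0, hαr, mul_comm]
    exact (div_lt_iff₀ hgap).1 hr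
  let j := ⌊(RY - RZ) / α⌋₊ + 1
  have hj : RY - RZ < j * α := (div_lt_iff₀ hα).1 (by exact_mod_cast Nat.lt_floor_add_one _)
  have hj' : (j - 1) * α ≤ RY - RZ := (le_div_iff₀ hα).1 <| by
    simpa [j] using Nat.floor_le (div_nonneg (sub_nonneg.2 hle) hα.le)
  obtain ⟨β, hαβ, hβ⟩ : ∃ β, α < β ∧ β < min (IZ / (r + 1 : ℕ)) (IY / (r + j : ℕ)) := by
    refine exists_between (lt_min ?_ ?_) <;> rw [lt_div_iff₀ (by positivity)] <;> push_cast <;>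
      linarith
  rw [lt_min_iff, lt_div_iff₀' (by positivity), lt_div_iff₀' (by positivity)] at hβ
  refine ⟨r, j, α, β, by exact_mod_cast hr0, Nat.le_add_left 1 _, hα, hαβ, hαr.ge, ?_, hβ⟩
  push_cast
  linarith

end Asymptotics

section DirectPart

open Filter

variable {X Y : Type*} [Fintype X] [Fintype Y] {P : X → ℝ} {W : X → Y → ℝ}

/-- The laws `Q m` of the codewords can be completed by decoding sets to an identification code
for `W` with both error probabilities at most `l`. -/
def IsIdentifiable {M : Type*} {n : ℕ} (W : X → Y → ℝ) (Q : M → (Fin n → X) → ℝ)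
    (l : ℝ) : Prop :=
  ∃ 𝒟 : M → Finset (Fin n → Y), IDCodeErr n W Q 𝒟 l l

lemma IsIdentifiable.mono {M : Type*} {n : ℕ} {Q : M → (Fin n → X) → ℝ} {l l' : ℝ}
    (h : IsIdentifiable W Q l) (hl : l ≤ l') : IsIdentifiable W Q l' :=
  h.imp fun _ hD => ⟨fun m => (hD.1 m).trans hl, fun m m' hm => (hD.2 m m' hm).trans hl⟩

lemma IsIndexing.sum_not_isIdentifiable_le {V M M' : Type*} [Fintype V] [DecidableEq V]
    [Fintype M] [Fintype M'] {v : M → M' → V} {A : M → Finset V} {n N : ℕ} {θ μ ε l : ℝ}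
    (h : IsIndexing v A N ε) (hW : IsChannel W) (hP : IsPMF P) (hN : 0 < N) (hε : 0 ≤ ε)
    (hmiss : ∑ x, iidProb P x * ∑ y ∈ (typicalOutputs P W θ n x)ᶜ, Wn W n x y ≤ μ)
    (hfalse : N * Real.exp (-(n * θ)) ≤ μ) (hl : 3 * μ + ε ≤ l) :
    ∑ c : V → Fin n → X with ¬ IsIdentifiable W (mixture fun m m' => c (v m m')) l,
        iidProb (iidProb P) c
      ≤ (Fintype.card M + Fintype.card M ^ 2) * Real.exp (-(μ * N)) := by
  refine le_trans (sum_le_sum_of_subset_of_nonneg (fun c => ?_)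
    fun c _ _ => hP.iidProb.iidProb.1 c) (sum_not_isReliable_le hW hP h.card_eq hmiss hfalse)
  rw [mem_filter_univ, mem_filter_univ]
  exact mt fun hc => ⟨_, h.idCodeErr hN hε hW hc hl⟩

lemma eventually_sum_not_isIdentifiable_lt (hW : IsChannel W) (hP : IsPMF P)
    {α β β' : ℝ} {N K : ℕ} (hα : 0 ≤ α) (hαβ : α < β) (hN : 1 ≤ N) (hNK : N ≤ K) (c : ℕ)
    (hI : K * β' < mutInf P W) :
    ∃ τ > 0, ∀ᶠ n : ℕ in atTop, ∀ D q : ℕ, D ≤ Real.exp (n * α) → Real.exp (n * β) ≤ q →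
      q ≤ Real.exp (n * β') →
      ∀ {V M M' : Type} [Fintype V] [DecidableEq V] [Fintype M] [Fintype M'] {v : M → M' → V}
        {A : M → Finset V}, Fintype.card M = q ^ (c * D ^ N) →
        IsIndexing v A (q ^ K) (N * D / q) →
        ∑ C : V → Fin n → X with
            ¬ IsIdentifiable W (mixture fun m m' => C (v m m')) (Real.exp (-(n * τ))),
          iidProb (iidProb P) C < 1 / 2 := by
  obtain ⟨θ, hKθ, hθ⟩ := exists_between hI
  obtain ⟨γ, hγ, hmiss⟩ := exists_sum_compl_typicalOutputs_le_exp hW hP hθ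
  obtain ⟨τ, hτ, hτγ, hτθ, hταβ⟩ :
      ∃ τ > 0, τ ≤ γ ∧ K * β' + τ ≤ θ ∧ α + 2 * τ ≤ β :=
    ⟨min γ (min (θ - K * β') ((β - α) / 2)),
      lt_min hγ (lt_min (sub_pos.2 hKθ) (by linarith)),
      min_le_left _ _,
      by linarith [(min_le_right γ (min (θ - K * β') ((β - α) / 2))).trans (min_le_left _ _)],
      by linarith [(min_le_right γ (min (θ - K * β') ((β - α) / 2))).trans (min_le_right _ _)]⟩
  refine ⟨τ / 2, half_pos hτ, ?_⟩
  filter_upwards [eventually_add_div_le_exp_neg (α := α) (β := β) hτ (by linarith) N,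
    eventually_two_mul_log_add_two_le hα hτ hταβ hN hNK β' c]
    with n herr hcount D q hD hq hq' V M M' _ _ _ _ v A hM hA
  have hq₀ : 0 < q := Nat.cast_pos.1 ((Real.exp_pos _).trans_le hq)
  have hγ' : Real.exp (-(n * γ)) ≤ Real.exp (-(n * τ)) := by gcongr
  calc _ ≤ (Fintype.card M + Fintype.card M ^ 2) *
          Real.exp (-(Real.exp (-(n * τ)) * (q ^ K : ℕ))) :=
        hA.sum_not_isIdentifiable_le hW hP (by positivity) (by positivity) ((hmiss n).trans hγ')
          (natCast_pow_mul_exp_neg_le hq' hτθ) (herr D q hD hq)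
    _ < 1 / 2 := by
        rw [hM]
        exact add_sq_mul_exp_neg_lt_half (by exact_mod_cast Nat.one_le_pow _ _ hq₀)
          (hcount D q hD hq hq')

variable {Z : Type*} [Fintype Z] {WY : X → Y → ℝ} {WZ : X → Z → ℝ} {RY RZ : ℝ}

/-- The rate pair `(RY, RZ)` is achievable by deterministic encoders `w`, with exponentially
decaying average errors, over the channels `WY` and `WZ` that share their input. -/
def IsDetAchievable (WY : X → Y → ℝ) (WZ : X → Z → ℝ) (RY RZ : ℝ) : Prop :=
  ∃ τ > 0, ∀ᶠ n : ℕ in atTop, ∃ (kY kZ : ℕ) (w : Fin kY → Fin kZ → Fin n → X),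
    IsIdentifiable WY (mixture w) (Real.exp (-(n * τ))) ∧
    IsIdentifiable WZ (mixture (flip w)) (Real.exp (-(n * τ))) ∧
    RY ≤ (1 / n) * Real.log (Real.log kY) ∧ RZ ≤ (1 / n) * Real.log (Real.log kZ)

lemma IsDetAchievable.symm (h : IsDetAchievable WY WZ RY RZ) : IsDetAchievable WZ WY RZ RY := by
  obtain ⟨τ, hτ, h⟩ := h
  exact ⟨τ, hτ, h.mono fun n ⟨kY, kZ, w, hY, hZ, hkY, hkZ⟩ => ⟨kZ, kY, flip w, hZ, hY, hkZ, hkY⟩⟩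

lemma isDetAchievable_of_le (hWY : IsChannel WY) (hWZ : IsChannel WZ) (hP : IsPMF P)
    (hRZ0 : 0 < RZ) (hle : RZ ≤ RY) (hRY : RY < mutInf P WY) (hRZ : RZ < mutInf P WZ) :
    IsDetAchievable WY WZ RY RZ := by
  obtain ⟨r, j, α, β', hr, hj, hα, hαβ', hRZα, hRYα, hβZ, hβY⟩ :=
    exists_rate_parameters hRZ0 hle hRY hRZ
  obtain ⟨β, hαβ, hββ'⟩ := exists_between hαβ'
  obtain ⟨α', hαα', hα'β⟩ := exists_between hαβ
  obtain ⟨τY, hτY, hY⟩ := eventually_sum_not_isIdentifiable_lt hWY hP (hα.trans hαα').le hα'β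
    (hr.trans (Nat.le_add_right r j)) le_rfl 1 hβY
  obtain ⟨τZ, hτZ, hZ⟩ := eventually_sum_not_isIdentifiable_lt hWZ hP (hα.trans hαα').le hα'β
    hr (Nat.le_succ r) j hβZ
  refine ⟨min τY τZ, lt_min hτY hτZ, ?_⟩
  filter_upwards [hY, hZ, eventually_exists_prime_mem_Icc_exp hα.le hαα',
    eventually_exists_prime_mem_Icc_exp (hα.trans hαβ).le hββ', eventually_gt_atTop 0,
    eventually_add_mul_le_exp (Real.exp 1) 0 (hα.trans hαβ)]
    with n hYn hZn ⟨D, hDprime, hD, hD'⟩ ⟨q, hqprime, hq, hq'⟩ hn hexp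
  rw [zero_mul, add_zero] at hexp
  have hqe : Real.exp 1 ≤ q := hexp.trans hq
  obtain ⟨V, _, _, kY, kZ, v, A, B, hkY, hkZ, hA, hB⟩ :=
    exists_isIndexing hqprime hDprime.two_le hj
  obtain ⟨C, hCY, hCZ⟩ := hP.iidProb.iidProb.exists_and_of_sum_not_lt_half
    (hYn D q hD' hq hq' (by rw [Fintype.card_fin, hkY, one_mul]) hA)
    (hZn D q hD' hq hq' (by rw [Fintype.card_fin, hkZ]) hB)
  have hmin : Real.exp (-(n * τY)) ≤ Real.exp (-(n * min τY τZ)) := by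
    gcongr
    exact min_le_left _ _
  have hmin' : Real.exp (-(n * τZ)) ≤ Real.exp (-(n * min τY τZ)) := by
    gcongr
    exact min_le_right _ _
  refine ⟨kY, kZ, fun m m' => C (v m m'), hCY.mono hmin, hCZ.mono hmin', hRYα.trans ?_,
    hRZα.trans ?_⟩
  · rw [hkY, ← one_mul (D ^ (r + j))]
    exact mul_le_inv_mul_log_log hn hD hqe le_rfl
  · rw [hkZ]
    exact mul_le_inv_mul_log_log hn hD hqe hj

lemma isDetAchievable_of_lt_mutInf (hWY : IsChannel WY) (hWZ : IsChannel WZ) (hP : IsPMF P)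
    (hRY0 : 0 < RY) (hRY : RY < mutInf P WY) (hRZ0 : 0 < RZ) (hRZ : RZ < mutInf P WZ) :
    IsDetAchievable WY WZ RY RZ := by
  rcases le_total RZ RY with hle | hle
  · exact isDetAchievable_of_le hWY hWZ hP hRZ0 hle hRY hRZ
  · exact (isDetAchievable_of_le hWZ hWY hP hRY0 hle hRZ hRY).symm

end DirectPart

lemma mixture_fin {X : Type*} {n k k' : ℕ} (w : Fin k → Fin k' → Fin n → X) :
    mixture w = fun m x => (k' : ℝ)⁻¹ * ∑ m', if x = w m m' then 1 else 0 := by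
  funext m x
  rw [mixture, Fintype.card_fin]

lemma isPMF_ite_eq {T : Type*} [Fintype T] [DecidableEq T] (t₀ : T) :
    IsPMF fun t => if t = t₀ then 1 else 0 :=
  ⟨fun t => by positivity, by simp⟩

lemma IsBC.isChannel_margY {X Y Z : Type*} [Fintype Y] [Fintype Z] {W : X → Y → Z → ℝ}
    (hW : IsBC W) : IsChannel (margY W) :=
  ⟨fun x y => sum_nonneg fun z _ => hW.1 x y z, hW.2⟩

lemma IsBC.isChannel_margZ {X Y Z : Type*} [Fintype Y] [Fintype Z] {W : X → Y → Z → ℝ}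
    (hW : IsBC W) : IsChannel (margZ W) :=
  ⟨fun x z => sum_nonneg fun y _ => hW.1 x y z, fun x => sum_comm.trans (hW.2 x)⟩

/-- **Claim 2.** Direct part of Theorem 3 with exponentially
decaying error probabilities and deterministic encoders. -/
theorem bc_id_direct_part_deterministic
    {X Y Z : Type} [Fintype X] [Fintype Y] [Fintype Z]
    [Nonempty X] [Nonempty Y] [Nonempty Z]
    (W : X → Y → Z → ℝ) (hW : IsBC W)
    (P : X → ℝ) (hP : IsPMF P)
    (RY RZ : ℝ) (hRY0 : 0 < RY) (hRY : RY < mutInf P (margY W))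
    (hRZ0 : 0 < RZ) (hRZ : RZ < mutInf P (margZ W)) :
    ∃ τ : ℝ, 0 < τ ∧ ∃ n₀ : ℕ, ∀ n : ℕ, n₀ ≤ n →
      ∃ (kY kZ : ℕ) (Q : Fin kY → Fin kZ → (Fin n → X) → ℝ)
        (DY : Fin kY → Finset (Fin n → Y)) (DZ : Fin kZ → Finset (Fin n → Z)),
        IsBCIDCode n kY kZ W Q DY DZ
          (Real.exp (-(n * τ))) (Real.exp (-(n * τ)))
          (Real.exp (-(n * τ))) (Real.exp (-(n * τ))) ∧
        RY ≤ (1 / n) * Real.log (Real.log kY) ∧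
        RZ ≤ (1 / n) * Real.log (Real.log kZ) ∧
        ∀ my mz, ∃ x0 : Fin n → X, ∀ x, Q my mz x = if x = x0 then 1 else 0 := by
  obtain ⟨τ, hτ, h⟩ := isDetAchievable_of_lt_mutInf hW.isChannel_margY hW.isChannel_margZ hP
    hRY0 hRY hRZ0 hRZ
  obtain ⟨n₀, hn₀⟩ := Filter.eventually_atTop.1 h
  refine ⟨τ, hτ, n₀, fun n hn => ?_⟩
  obtain ⟨kY, kZ, w, ⟨DY, hDY⟩, ⟨DZ, hDZ⟩, hkY, hkZ⟩ := hn₀ n hn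
  exact ⟨kY, kZ, fun my mz x => if x = w my mz then 1 else 0, DY, DZ,
    ⟨fun my mz => isPMF_ite_eq (w my mz), mixture_fin w ▸ hDY, mixture_fin (flip w) ▸ hDZ⟩,
    hkY, hkZ, fun my mz => ⟨w my mz, fun _ => rfl⟩⟩
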